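/- Let f ∈ R be homogeneous and suppose that τ(f^{1−1/p}) = m^j for some integer j ≥ 1. Then M_e − (n+1)p^e = −n − j for every e ≥ e_0. -/

import Mathlib

/-!
Put `q = p ^ e` and `N = (n + 1)(q - 1)`. In characteristic `p` the ideal `m^{[e]}` is generated by
the powers `x_i ^ q` (`bracketPow_mxI_eq`), so it is monomial: a polynomial lies in it iff every
exponent vector in its support has a coordinate `≥ q` (`mem_bracketPow_mxI_iff`). The monomials
outside `m^{[e]}` are thus those with exponent vector `≤ (q-1, …, q-1)`; there is such a monomial
in every degree up to `N`, and none above `N`.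

The inequality `e ≥ e_0` says `m ^ j ⊄ m^{[e]}`, i.e. `j ≤ N` (`le_of_e0_le`). A monomial of degree
`N - j + 1 ≤ N` outside `m^{[e]}` is multiplied by `m ^ j` into degrees `> N`, hence into `m^{[e]}`.
Conversely, if a homogeneous `g ∉ m^{[e]}` has degree `≤ N - j`, one of its monomials `x ^ s` has
`s ≤ (q-1, …, q-1)`, and `s` can be enlarged by some `u` of degree `j` below the same bound, so that
`g * x ^ u ∉ m^{[e]}` although `x ^ u ∈ m ^ j`. Therefore `M_e = N - j + 1`.
-/


open MvPolynomial

noncomputable section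

/-- `I^{[e]}`-style bracket power: the ideal generated by `q`-th powers of elements of `I`. -/
def bracketPow {A : Type*} [CommRing A] (I : Ideal A) (q : ℕ) : Ideal A :=
  Ideal.span ((fun u => u ^ q) '' (I : Set A))

/-- The test ideal `τ(f^{1 - 1/p^e})`: the smallest ideal `a` with `f^{p^e - 1} ∈ a^{[e]}`. -/
def testIdeal {A : Type*} [CommRing A] (p : ℕ) (f : A) (e : ℕ) : Ideal A :=
  sInf {a : Ideal A | f ^ (p ^ e - 1) ∈ bracketPow a (p ^ e)}

/-- The homogeneous maximal ideal `m = (x_0, ..., x_n)`. -/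
def mxI (k : Type*) [Field k] (n : ℕ) : Ideal (MvPolynomial (Fin (n + 1)) k) :=
  Ideal.span (Set.range (X : Fin (n + 1) → MvPolynomial (Fin (n + 1)) k))

/-- The set of degrees of homogeneous elements of `(m^{[e]} : τ) \ m^{[e]}`. -/
def MeSet (k : Type*) [Field k] (n p : ℕ) (τ : Ideal (MvPolynomial (Fin (n + 1)) k))
    (e : ℕ) : Set ℕ :=
  {d : ℕ | ∃ g : MvPolynomial (Fin (n + 1)) k,
    g ∈ (bracketPow (mxI k n) (p ^ e)).colon τ ∧
    g ∉ bracketPow (mxI k n) (p ^ e) ∧ g.IsHomogeneous d}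

/-- `M_e`: the minimal degree of a homogeneous element of `(m^{[e]} : τ) \ m^{[e]}`. -/
def Me (k : Type*) [Field k] (n p : ℕ) (τ : Ideal (MvPolynomial (Fin (n + 1)) k))
    (e : ℕ) : ℕ :=
  sInf (MeSet k n p τ e)

/-- `e_0`: the least `e` with `τ ⊄ m^{[e]}`. -/
def e0 (k : Type*) [Field k] (n p : ℕ) (τ : Ideal (MvPolynomial (Fin (n + 1)) k)) : ℕ :=
  sInf {e : ℕ | ¬ τ ≤ bracketPow (mxI k n) (p ^ e)}

/-- By the Frobenius endomorphism, `m^{[e]}` is generated by the `p ^ e`-th powers of the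
variables. -/
lemma bracketPow_mxI_eq {k : Type*} [Field k] {p : ℕ} (n : ℕ) [Fact p.Prime] [CharP k p] (e : ℕ) :
    bracketPow (mxI k n) (p ^ e) =
      Ideal.span ((fun s : Fin (n + 1) →₀ ℕ => monomial s (1 : k)) ''
        (Set.range fun i => Finsupp.single i (p ^ e))) := by
  have h : bracketPow (mxI k n) (p ^ e) =
      (mxI k n).map (iterateFrobenius (MvPolynomial (Fin (n + 1)) k) p e) := rfl
  rw [h, mxI, Ideal.map_span, ← Set.range_comp, ← Set.range_comp]
  congr 2
  ext1 i
  simp [iterateFrobenius_def, X_pow_eq_monomial]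

lemma mem_bracketPow_mxI_iff {k : Type*} [Field k] {p n : ℕ} [Fact p.Prime] [CharP k p] {e : ℕ}
    {g : MvPolynomial (Fin (n + 1)) k} :
    g ∈ bracketPow (mxI k n) (p ^ e) ↔ ∀ s ∈ g.support, ∃ i, p ^ e ≤ s i := by
  rw [bracketPow_mxI_eq, mem_ideal_span_monomial_image]
  simp

lemma mem_mxI_pow_iff {k : Type*} [Field k] {n j : ℕ} {g : MvPolynomial (Fin (n + 1)) k} :
    g ∈ mxI k n ^ j ↔ ∀ s ∈ g.support, j ≤ s.degree :=
  mem_pow_idealOfVars_iff j g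

/-- Every degree up to that of `t` is attained by an exponent vector below `t`. -/
lemma exists_le_degree_eq {m : ℕ} (t : Fin m →₀ ℕ) (D : ℕ) (hD : D ≤ t.degree) :
    ∃ s ≤ t, s.degree = D := by
  induction D with
  | zero => exact ⟨0, zero_le, by simp⟩
  | succ D ih =>
    obtain ⟨s, hs, hsD⟩ := ih (by omega)
    obtain ⟨i, hi⟩ : ∃ i, s i < t i := by
      by_contra! h
      have : t.degree ≤ s.degree := by
        rw [Finsupp.degree_eq_sum, Finsupp.degree_eq_sum]
        exact Finset.sum_le_sum fun i _ => h i
      omega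
    refine ⟨s + Finsupp.single i 1, fun l => ?_, by simp [hsD]⟩
    have := hs l
    by_cases hl : i = l
    · subst hl; simpa using hi
    · simpa [Finsupp.single_apply, hl] using this

/-- The exponent vector `(c, …, c)`. -/
def constExp (n c : ℕ) : Fin (n + 1) →₀ ℕ := Finsupp.equivFunOnFinite.symm fun _ => c

lemma constExp_apply (n c : ℕ) (i : Fin (n + 1)) : constExp n c i = c := rfl

lemma degree_constExp (n c : ℕ) : (constExp n c).degree = (n + 1) * c := by
  simp [Finsupp.degree_eq_sum, constExp_apply]

lemma degree_le_of_forall_lt {n q : ℕ} {s : Fin (n + 1) →₀ ℕ} (hs : ∀ i, s i < q) :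
    s.degree ≤ (n + 1) * (q - 1) := by
  rw [Finsupp.degree_eq_sum]
  calc ∑ i, s i ≤ ∑ _i : Fin (n + 1), (q - 1) :=
        Finset.sum_le_sum fun i _ => Nat.le_sub_one_of_lt (hs i)
    _ = (n + 1) * (q - 1) := by simp

lemma monomial_mem_mxI_pow {k : Type*} [Field k] {n j : ℕ} {s : Fin (n + 1) →₀ ℕ}
    (hs : j ≤ s.degree) : monomial s (1 : k) ∈ mxI k n ^ j := by
  rw [mem_mxI_pow_iff]
  intro t ht
  rwa [Finset.mem_singleton.mp (support_monomial_subset ht)]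

lemma mxI_pow_le_bracketPow_iff {k : Type*} [Field k] {p n : ℕ} [hp : Fact p.Prime] [CharP k p]
    {j e : ℕ} : mxI k n ^ j ≤ bracketPow (mxI k n) (p ^ e) ↔ (n + 1) * (p ^ e - 1) < j := by
  have hq : 0 < p ^ e := pow_pos hp.out.pos e
  constructor
  · intro h
    by_contra! hj
    obtain ⟨s, hs, hsj⟩ := exists_le_degree_eq (constExp n (p ^ e - 1)) j
      (by rwa [degree_constExp])
    obtain ⟨i, hi⟩ := mem_bracketPow_mxI_iff.mp (h (monomial_mem_mxI_pow (k := k) hsj.ge)) s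
      (by simp)
    have := hs i
    rw [constExp_apply] at this
    omega
  · intro hj g hg
    rw [mem_bracketPow_mxI_iff]
    intro s hs
    by_contra! h
    have h₁ := mem_mxI_pow_iff.mp hg s hs
    have h₂ := degree_le_of_forall_lt h
    omega

lemma le_of_e0_le {k : Type*} [Field k] {p n : ℕ} [hp : Fact p.Prime] [CharP k p]
    {j e : ℕ} (he : e0 k n p (mxI k n ^ j) ≤ e) : j ≤ (n + 1) * (p ^ e - 1) := by
  -- The set defining `e_0` contains `j`, since `p ^ j > j`; so its infimum is not a junk value.
  have hne : {e : ℕ | ¬ mxI k n ^ j ≤ bracketPow (mxI k n) (p ^ e)}.Nonempty := by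
    refine ⟨j, ?_⟩
    rw [Set.mem_ofPred_eq, mxI_pow_le_bracketPow_iff, not_lt]
    have : j < p ^ j := Nat.lt_pow_self hp.out.one_lt
    calc j ≤ p ^ j - 1 := by omega
      _ ≤ (n + 1) * (p ^ j - 1) := Nat.le_mul_of_pos_left _ n.succ_pos
  have h := Nat.sInf_mem hne
  rw [Set.mem_ofPred_eq, mxI_pow_le_bracketPow_iff, not_lt] at h
  refine h.trans (Nat.mul_le_mul_left _ (Nat.sub_le_sub_right ?_ 1))
  exact Nat.pow_le_pow_right hp.out.pos he

/-- With `N = (n + 1)(p ^ e - 1)`, the least degree of a homogeneous element of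
`(m^{[e]} : m ^ j) \ m^{[e]}` is `N - j + 1`. -/
lemma Me_mxI_pow {k : Type*} [Field k] {p n : ℕ} [hp : Fact p.Prime] [CharP k p]
    {j e : ℕ} (hj : 1 ≤ j) (hje : j ≤ (n + 1) * (p ^ e - 1)) :
    Me k n p (mxI k n ^ j) e = (n + 1) * (p ^ e - 1) - j + 1 := by
  have hq : 0 < p ^ e := pow_pos hp.out.pos e
  refine IsLeast.csInf_eq ⟨?_, ?_⟩
  · obtain ⟨t, ht, htD⟩ := exists_le_degree_eq (constExp n (p ^ e - 1))
      ((n + 1) * (p ^ e - 1) - j + 1) (by rw [degree_constExp]; omega)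
    refine ⟨monomial t 1, ?_, ?_, isHomogeneous_monomial 1 htD⟩
    · rw [Submodule.mem_colon]
      intro h hh
      have hmem : monomial t (1 : k) * h ∈ mxI k n ^ ((n + 1) * (p ^ e - 1) - j + 1 + j) := by
        rw [pow_add]
        exact Ideal.mul_mem_mul (monomial_mem_mxI_pow htD.ge) hh
      exact mxI_pow_le_bracketPow_iff.mpr (by omega) hmem
    · intro hmem
      obtain ⟨i, hi⟩ := mem_bracketPow_mxI_iff.mp hmem t (by simp)
      have := ht i
      rw [constExp_apply] at this
      omega
  · rintro d ⟨g, hg, hg', hgd⟩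
    by_contra! hd
    rw [mem_bracketPow_mxI_iff] at hg'
    push Not at hg'
    obtain ⟨s, hs, hsq⟩ := hg'
    have hsd : s.degree = d := by
      by_contra hne
      exact (mem_support_iff.mp hs) (hgd.coeff_eq_zero hne)
    have hle : s ≤ constExp n (p ^ e - 1) := fun i => Nat.le_sub_one_of_lt (hsq i)
    have hdeg := congrArg Finsupp.degree (add_tsub_cancel_of_le hle)
    rw [map_add, degree_constExp, hsd] at hdeg
    obtain ⟨u, hu, huj⟩ := exists_le_degree_eq (constExp n (p ^ e - 1) - s) j (by omega)
    have hmem := Submodule.mem_colon.mp hg _ (monomial_mem_mxI_pow (k := k) huj.ge)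
    rw [smul_eq_mul, mem_bracketPow_mxI_iff] at hmem
    obtain ⟨i, hi⟩ := hmem (s + u) (by
      rw [mem_support_iff, coeff_mul_monomial, mul_one]
      exact mem_support_iff.mp hs)
    have h₁ := hu i
    have h₂ := hsq i
    rw [Finsupp.tsub_apply, constExp_apply] at h₁
    rw [Finsupp.add_apply] at hi
    omega

/-- If `f` is homogeneous and `τ(f^{1−1/p}) = m^j` for some `j ≥ 1`,
then `M_e − (n+1)p^e = −n − j` for every `e ≥ e_0`. -/
theorem Me_sub_eq_of_testIdeal_eq_pow {k : Type*} [Field k] {p n : ℕ}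
    [Fact p.Prime] [CharP k p]
    (f : MvPolynomial (Fin (n + 1)) k) (d : ℕ) (hf : f.IsHomogeneous d)
    (j : ℕ) (hj : 1 ≤ j) (hτ : testIdeal p f 1 = (mxI k n) ^ j)
    (e : ℕ) (he : e0 k n p (testIdeal p f 1) ≤ e) :
    (Me k n p (testIdeal p f 1) e : ℤ) - (n + 1) * p ^ e = -n - j := by
  rw [hτ] at he ⊢
  have hje := le_of_e0_le he
  have hq : 0 < p ^ e := pow_pos (Fact.out : p.Prime).pos e
  rw [Me_mxI_pow hj hje]
  push_cast [Nat.cast_sub hje, Nat.cast_sub (Nat.one_le_iff_ne_zero.mpr hq.ne')]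
  ring

end
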